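/- arXiv:2104.06883 — 2 statements merged into one kernel-verified Lean document; each statement's English description precedes it below -/
import Mathlib

section
/- Fix a polarization w = (w₁,…,w_γ), rational numbers r > 0 and d, a natural number k, an integer χ, and a real number M > 0. Then the set of rational numbers α with 0 < α < M for which there exist: a natural number k' with 0 ≤ k' ≤ k; integers r₁',…,r_γ' with 0 ≤ rᵢ' ≤ r/w_m for each i, where r' := Σᵢ wᵢ rᵢ'; and a rational number d' with d' + r'·χ ∈ ℤ, such that r'·k ≠ r·k' and α = (r·d' − r'·d)/(r'·k − r·k'), is a finite set. (This is the finiteness of critical values in Lemma 3.1 of the paper: for coherent systems of type (r,d,k) on a polarized nodal curve with χ = χ(O_C), there are only finitely many critical values of α in any bounded interval (0,M).) -/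
/- A polarization on a nodal curve with `γ` components is `w = (w₁,…,w_γ)` with
`0 < wᵢ < 1` and `Σ wᵢ = 1`; `w_m = minᵢ wᵢ`.  For a depth one sheaf with restriction
ranks `rᵢ'`, the `w`-rank is `r' = Σ wᵢ rᵢ'` and the `w`-degree `d'` satisfies
`d' + r'·χ(O_C) ∈ ℤ`. -/

open Finset

/-!
For a fixed `w`-rank `r'` and number `k'` of sections, integrality of `n = d' + r' χ` makes the
critical value an affine function of `n ∈ ℤ`, so a bounded interval contains only finitely many of
its values; and boundedness of the restriction ranks leaves finitely many choices of `(k', r')`.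
-/

theorem finite_range_intCast_affine_inter_uIcc {K : Type*} [Field K] [LinearOrder K]
    [IsStrictOrderedRing K] [FloorRing K] (a b s t : K) :
    (Set.range (fun n : ℤ => a * n + b) ∩ Set.uIcc s t).Finite := by
  obtain rfl | ha := eq_or_ne a 0
  · exact (Set.finite_singleton b).subset fun _ ⟨⟨n, hn⟩, _⟩ => by simpa using hn.symm
  have preimage_eq : (fun n : ℤ => a * n + b) ⁻¹' Set.uIcc s t =
      Int.cast ⁻¹' Set.uIcc ((s - b) / a) ((t - b) / a) := by
    rw [← Set.preimage_const_mul_uIcc ha, ← Set.preimage_add_const_uIcc]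
    rfl
  rw [← Set.image_preimage_eq_range_inter, preimage_eq, Set.uIcc, Int.preimage_Icc]
  exact (Set.finite_Icc _ _).image _

theorem finite_setOf_forall_nonneg_intCast_le {ι R : Type*} [Finite ι] [Ring R] [LinearOrder R]
    [FloorRing R] (B : ι → R) : {v : ι → ℤ | ∀ i, 0 ≤ v i ∧ (v i : R) ≤ B i}.Finite :=
  (Set.Finite.pi' fun i => Set.finite_Icc 0 ⌊B i⌋).subset fun _ hv i =>
    ⟨(hv i).1, Int.le_floor.mpr (hv i).2⟩

section CriticalValues

variable {K : Type*} [Field K]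

/-- The critical value attached to the types `(r, d, k)` of a coherent system and `(r', d', k')` of
a subsystem: the value of `α` at which the slopes `(d + α k) / r` and `(d' + α k') / r'` agree.
It has the junk value `0` when `r' k = r k'`. -/
def criticalValue (r d k r' d' k' : K) : K :=
  (r * d' - r' * d) / (r' * k - r * k')

/-- The critical values, for coherent systems of type `(r, d, k)`, attached to subsystems of fixed
`w`-rank `r'` with fixed `k'`. The `w`-degree `d'` of a subsystem is constrained only by the
integrality of its Euler characteristic `d' + r' χ`, where `χ` stands for `χ(O_C)`. -/
def criticalValueSet (r d k χ r' k' : K) : Set K :=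
  {α | ∃ d', (∃ n : ℤ, d' + r' * χ = n) ∧ α = criticalValue r d k r' d' k'}

theorem criticalValueSet_subset_range (r d k χ r' k' : K) :
    criticalValueSet r d k χ r' k' ⊆ Set.range fun n : ℤ =>
      r / (r' * k - r * k') * n + -(r' * (r * χ + d)) / (r' * k - r * k') := by
  rintro α ⟨d', ⟨n, hn⟩, rfl⟩
  refine ⟨n, ?_⟩
  simp only [criticalValue, ← hn]
  ring

variable [LinearOrder K] [IsStrictOrderedRing K] [FloorRing K]

theorem finite_criticalValueSet_inter_uIcc (r d k χ r' k' s t : K) :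
    (criticalValueSet r d k χ r' k' ∩ Set.uIcc s t).Finite :=
  (finite_range_intCast_affine_inter_uIcc _ _ s t).subset
    (Set.inter_subset_inter_left _ (criticalValueSet_subset_range r d k χ r' k'))

theorem stmt10_general {ι : Type*} [Fintype ι] (w : ι → K) (B r d χ : K) (k : ℕ) (s t : K) :
    {α : K | α ∈ Set.Ioo s t ∧
      ∃ (k' : ℕ) (v : ι → ℤ) (r' d' : K),
        k' ≤ k ∧
        (∀ i, 0 ≤ v i ∧ (v i : K) ≤ B) ∧
        r' = ∑ i, w i * v i ∧
        (∃ n : ℤ, d' + r' * χ = n) ∧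
        r' * k ≠ r * k' ∧
        α = criticalValue r d k r' d' k'}.Finite := by
  have finite_types : (Set.Iic k ×ˢ {v : ι → ℤ | ∀ i, 0 ≤ v i ∧ (v i : K) ≤ B}).Finite :=
    (Set.finite_Iic k).prod (finite_setOf_forall_nonneg_intCast_le fun _ => B)
  have finite_values := finite_types.biUnion fun p _ =>
    finite_criticalValueSet_inter_uIcc r d k χ (∑ i, w i * p.2 i) p.1 s t
  refine finite_values.subset ?_
  rintro α ⟨hα, k', v, _, d', hk', hv, rfl, hd', -, hα_eq⟩
  exact Set.mem_biUnion (x := (k', v)) ⟨hk', hv⟩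
    ⟨⟨d', hd', hα_eq⟩, Set.Icc_subset_uIcc (Set.Ioo_subset_Icc_self hα)⟩

end CriticalValues

/-- **Lemma 3.1 (finiteness of critical values)**: for coherent systems of type
`(r,d,k)` on a polarized nodal curve, the set of critical values `α` in a bounded
interval `(0, M)` is finite. -/
theorem stmt10 (γ : ℕ) (hγ : 0 < γ) (w : Fin γ → ℚ)
    (hw : ∀ i, 0 < w i ∧ w i < 1) (hsum : ∑ i, w i = 1)
    (r d : ℚ) (hr : 0 < r) (k : ℕ) (χ : ℤ) (M : ℝ) (hM : 0 < M) :
    {α : ℚ | 0 < α ∧ (α : ℝ) < M ∧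
      ∃ (k' : ℕ) (rv : Fin γ → ℤ) (r' d' : ℚ),
        k' ≤ k ∧
        (∀ i, 0 ≤ rv i ∧ (rv i : ℚ) ≤
          r / (univ.inf' (univ_nonempty_iff.mpr ⟨⟨0, hγ⟩⟩) w)) ∧
        r' = ∑ i, w i * rv i ∧
        (∃ n : ℤ, d' + r' * (χ : ℚ) = (n : ℚ)) ∧
        r' * (k : ℚ) ≠ r * (k' : ℚ) ∧
        α = (r * d' - r' * d) / (r' * (k : ℚ) - r * (k' : ℚ))}.Finite := by
  obtain ⟨N, hN⟩ := exists_rat_gt M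
  exact (stmt10_general w _ r d χ k 0 N).subset fun _ ⟨hα_pos, hα_lt, hα⟩ =>
    ⟨⟨hα_pos, mod_cast hα_lt.trans hN⟩, hα⟩
end

section
/- Let γ ≥ 1 and δ ≥ 0 be integers, let w = (w₁,…,w_γ) be a polarization with w_m = minᵢ wᵢ, let g₁,…,g_γ be integers with gᵢ ≥ 2, let r₁,…,r_γ be natural numbers with r_M := maxᵢ rᵢ, and let s₁,…,s_δ be natural numbers with 0 ≤ sⱼ ≤ r_M for each j. Set p_a = Σᵢ gᵢ + δ − γ + 1, wrk = Σᵢ wᵢ rᵢ, and Δ = Σᵢ rᵢ(1 − gᵢ) + wrk·(p_a − 1) − Σⱼ sⱼ. Then Δ ≥ −(r_M − wrk)·(p_a − 1) ≥ −((1/w_m) − 1)·wrk·(p_a − 1). (This is Lemma 1.4(d) of the paper, expressed via the formula of Lemma 1.4(a): for a depth one sheaf E on a polarized nodal curve with γ components of genera gᵢ ≥ 2, δ nodes, restriction ranks rᵢ, and free-part ranks sⱼ at the nodes, one has Δ_w(E) ≥ −(r_M − w-rank(E))(p_a(C) − 1) ≥ −((1/w_m) − 1)·w-rank(E)·(p_a(C)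 − 1).) -/
/- A nodal curve with `γ ≥ 1` smooth components of genera `gᵢ ≥ 2` and `δ ≥ 0` nodes
has arithmetic genus `p_a = Σ gᵢ + δ − γ + 1`.  A polarization is `w` with
`0 < wᵢ < 1`, `Σ wᵢ = 1`, `w_m = minᵢ wᵢ`.  For a depth one sheaf `E` with restriction
ranks `rᵢ` (`r_M = maxᵢ rᵢ`) and free-part ranks `sⱼ ≤ r_M` at the nodes,
`Δ_w(E) = Σᵢ rᵢ(1 − gᵢ) + (Σᵢ wᵢrᵢ)(p_a − 1) − Σⱼ sⱼ`. -/

open Finset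

/-!
Put `R = r_M`. Since `p_a - 1 = ∑ (gᵢ - 1) + δ`, the terms in the `w`-rank cancel in
`Δ + (R - wrk) (p_a - 1) = ∑ (R - rᵢ) (gᵢ - 1) + ∑ (R - sⱼ)`, and every summand on the right is
nonnegative. For the second inequality, the single term of `wrk = ∑ wᵢ rᵢ` at an index where `r` is
maximal is already at least `w_m * r_M`, so `r_M - wrk ≤ (1 / w_m - 1) * wrk`; multiply by
`p_a - 1 ≥ 0`.
-/

section

variable {ι κ K : Type*}

theorem inf'_mul_sup'_le_sum_mul [Semiring K] [LinearOrder K] [IsOrderedRing K] {t : Finset ι}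
    (ht : t.Nonempty) {w r : ι → K} (hw : ∀ i ∈ t, 0 ≤ w i) (hr : ∀ i ∈ t, 0 ≤ r i) :
    t.inf' ht w * t.sup' ht r ≤ ∑ i ∈ t, w i * r i := by
  obtain ⟨k, hk, hmax⟩ := exists_mem_eq_sup' ht r
  calc t.inf' ht w * t.sup' ht r = t.inf' ht w * r k := by rw [hmax]
    _ ≤ w k * r k := mul_le_mul_of_nonneg_right (inf'_le w hk) (hr k hk)
    _ ≤ ∑ i ∈ t, w i * r i :=
      single_le_sum (f := fun i => w i * r i) (fun i hi => mul_nonneg (hw i hi) (hr i hi)) hk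

theorem sup'_sub_sum_mul_le [Field K] [LinearOrder K] [IsStrictOrderedRing K] {t : Finset ι}
    (ht : t.Nonempty) {w r : ι → K} (hw : ∀ i ∈ t, 0 < w i) (hr : ∀ i ∈ t, 0 ≤ r i) :
    t.sup' ht r - ∑ i ∈ t, w i * r i ≤ (1 / t.inf' ht w - 1) * ∑ i ∈ t, w i * r i := by
  have hmin : 0 < t.inf' ht w := (lt_inf'_iff ht).mpr hw
  have hsup : t.sup' ht r ≤ (∑ i ∈ t, w i * r i) / t.inf' ht w :=
    (le_div_iff₀' hmin).mpr (inf'_mul_sup'_le_sum_mul ht (fun i hi => (hw i hi).le) hr)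
  rw [sub_one_mul, one_div_mul_eq_div]
  exact sub_le_sub_right hsup _

/-- The arithmetic genus of a connected nodal curve with `n` nodes whose components, indexed by `ι`,
have genera `g`. It is an element of the ring `K` in which degrees and ranks are compared. -/
def arithmeticGenus [Ring K] [Fintype ι] (g : ι → K) (n : ℕ) : K :=
  ∑ i, g i + n - Fintype.card ι + 1

/-- The difference `Δ_w(E)` between the `w`-degree of a depth one sheaf `E` and the sum of the
degrees of its restrictions to the components, encoded by the formula expressing it through
numerical data: the genera `g` of the components, the ranks `r` of the restrictions and the ranks
`s` of the free parts at the nodes, which are indexed by `κ`. The `w`-rank of `E` is `w ⬝ᵥ r`. -/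
def degreeDefect [Ring K] [Fintype ι] [Fintype κ] (w g r : ι → K) (s : κ → K) : K :=
  ∑ i, r i * (1 - g i) + (w ⬝ᵥ r) * (arithmeticGenus g (Fintype.card κ) - 1) - ∑ j, s j

theorem arithmeticGenus_sub_one [Ring K] [Fintype ι] (g : ι → K) (n : ℕ) :
    arithmeticGenus g n - 1 = ∑ i, (g i - 1) + n := by
  simp only [arithmeticGenus, sum_sub_distrib, sum_const, card_univ, nsmul_one]
  abel

theorem one_le_arithmeticGenus [Ring K] [PartialOrder K] [IsOrderedRing K] [Fintype ι]
    {g : ι → K} (hg : ∀ i, 1 ≤ g i) (n : ℕ) : 1 ≤ arithmeticGenus g n := by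
  rw [← sub_nonneg, arithmeticGenus_sub_one]
  exact add_nonneg (sum_nonneg fun i _ => sub_nonneg.mpr (hg i)) n.cast_nonneg

theorem degreeDefect_add_sub_mul [CommRing K] [Fintype ι] [Fintype κ] (w g r : ι → K) (s : κ → K)
    (R : K) :
    degreeDefect w g r s + (R - w ⬝ᵥ r) * (arithmeticGenus g (Fintype.card κ) - 1) =
      ∑ i, (R - r i) * (g i - 1) + ∑ j, (R - s j) := by
  have hcomponents : ∑ i, (R - r i) * (g i - 1) =
      R * ∑ i, (g i - 1) + ∑ i, r i * (1 - g i) := by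
    rw [mul_sum, ← sum_add_distrib]
    exact sum_congr rfl fun i _ => by ring
  have hnodes : ∑ j, (R - s j) = R * Fintype.card κ - ∑ j, s j := by
    rw [sum_sub_distrib, sum_const, card_univ, nsmul_eq_mul']
  rw [degreeDefect, hcomponents, hnodes, arithmeticGenus_sub_one]
  ring

theorem neg_sub_mul_le_degreeDefect [CommRing K] [PartialOrder K] [IsOrderedRing K]
    [Fintype ι] [Fintype κ] (w : ι → K) {g r : ι → K} {s : κ → K} {R : K}
    (hg : ∀ i, 1 ≤ g i) (hr : ∀ i, r i ≤ R) (hs : ∀ j, s j ≤ R) :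
    -(R - w ⬝ᵥ r) * (arithmeticGenus g (Fintype.card κ) - 1) ≤ degreeDefect w g r s := by
  rw [neg_mul, neg_le_iff_add_nonneg, degreeDefect_add_sub_mul]
  exact add_nonneg
    (sum_nonneg fun i _ => mul_nonneg (sub_nonneg.mpr (hr i)) (sub_nonneg.mpr (hg i)))
    (sum_nonneg fun j _ => sub_nonneg.mpr (hs j))

theorem stmt12_general [Field K] [LinearOrder K] [IsStrictOrderedRing K]
    [Fintype ι] [Nonempty ι] [Fintype κ] {w g r : ι → K} {s : κ → K}
    (hw : ∀ i, 0 < w i) (hg : ∀ i, 1 ≤ g i) (hr : ∀ i, 0 ≤ r i)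
    (hs : ∀ j, s j ≤ univ.sup' univ_nonempty r) :
    -(univ.sup' univ_nonempty r - w ⬝ᵥ r) * (arithmeticGenus g (Fintype.card κ) - 1) ≤
        degreeDefect w g r s ∧
      -(1 / univ.inf' univ_nonempty w - 1) * (w ⬝ᵥ r) *
          (arithmeticGenus g (Fintype.card κ) - 1) ≤
        -(univ.sup' univ_nonempty r - w ⬝ᵥ r) * (arithmeticGenus g (Fintype.card κ) - 1) := by
  refine ⟨neg_sub_mul_le_degreeDefect w hg (fun i => le_sup' r (mem_univ i)) hs,
    mul_le_mul_of_nonneg_right ?_ (sub_nonneg.mpr (one_le_arithmeticGenus hg _))⟩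
  rw [neg_mul]
  exact neg_le_neg (sup'_sub_sum_mul_le univ_nonempty (fun i _ => hw i) fun i _ => hr i)

end

/-- **Lemma 1.4(d)**:
`Δ_w(E) ≥ −(r_M − wrk(E))(p_a − 1) ≥ −((1/w_m) − 1)·wrk(E)·(p_a − 1)`. -/
theorem stmt12 (γ δ : ℕ) (hγ : 0 < γ) (w : Fin γ → ℚ)
    (hw : ∀ i, 0 < w i ∧ w i < 1) (hsum : ∑ i, w i = 1)
    (g : Fin γ → ℤ) (hg : ∀ i, 2 ≤ g i)
    (r : Fin γ → ℕ) (s : Fin δ → ℕ)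
    (wm rM : ℚ)
    (hwm : wm = univ.inf' (univ_nonempty_iff.mpr ⟨⟨0, hγ⟩⟩) w)
    (hrM : rM = univ.sup' (univ_nonempty_iff.mpr ⟨⟨0, hγ⟩⟩) (fun i => (r i : ℚ)))
    (hs : ∀ j, (s j : ℚ) ≤ rM)
    (pa wrk Δ : ℚ)
    (hpa : pa = ∑ i, (g i : ℚ) + (δ : ℚ) - (γ : ℚ) + 1)
    (hwrk : wrk = ∑ i, w i * (r i : ℚ))
    (hΔ : Δ = ∑ i, (r i : ℚ) * (1 - (g i : ℚ)) + wrk * (pa - 1) - ∑ j, (s j : ℚ)) :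
    -(rM - wrk) * (pa - 1) ≤ Δ ∧
    -((1 / wm) - 1) * wrk * (pa - 1) ≤ -(rM - wrk) * (pa - 1) := by
  have : Nonempty (Fin γ) := ⟨⟨0, hγ⟩⟩
  have one_le_g (i : Fin γ) : (1 : ℚ) ≤ g i := by exact_mod_cast one_le_two.trans (hg i)
  subst hwm hrM hpa hwrk hΔ
  simpa only [degreeDefect, arithmeticGenus, dotProduct, Fintype.card_fin] using
    stmt12_general (fun i => (hw i).1) one_le_g (fun i => (r i).cast_nonneg) hs
end
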